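/- arXiv:2004.03086 — 3 statements merged into one kernel-verified Lean document; each statement's English description precedes it below -/
import Mathlib

section
/- Assume the smallness assumption (𝒞_b C₂/ν²) sup_{u∈U_ad}‖u‖_{L²(Ω)} ≤ θ < 1. Let (ȳ,p̄,z̄,r̄,ū) be a local solution of the optimal control problem satisfying the sufficient second order optimality condition j''(ū)v² ≥ μ‖v‖²_{L²(Ω)} for all v ∈ C_ū^τ, with constants μ > 0 and τ > 0. Let ũ := Π_{[a,b]}(−α⁻¹z̄_𝒯), and let M > 0 be such that max{‖ū + θ_𝒯(ũ − ū)‖_{L^∞(Ω)}, ‖ũ − ū‖_{L^∞(Ω)}} ≤ M, where θ_𝒯 ∈ (0,1) is the mean value parameter. If the mesh 𝒯 is such that ũ − ū ∈ C_ū^τ and ‖z̄ − z̄_𝒯‖_{L²(Ω)} ≤ αμ(2C_M)⁻¹, then (μ/2)‖ū − ũ‖²_{L²(Ω)} ≤ (j'(ũ) − j'(ū))(ũ − ū), where C_M is the constant from the Lipschitz-type estimate |j''(u+h)v² − j''(u)v²| ≤ C_M‖h‖_{L²(Ω)}‖v‖²_{L²(Ω)}. -/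
/-!
Write `h = ũ - ū`. The mean value theorem for `t ↦ j'(ū + t h) h` gives `t ∈ (0,1)` with
`(j'(ũ) - j'(ū)) h = j''(ū + t h) h²`. Since `h` lies in the cone `C_ū^τ`, the second order
condition yields `j''(ū) h² ≥ μ' ‖h‖²`, and the Lipschitz estimate for `j''` bounds the difference
between the two second derivatives by `C_M ‖h‖ ‖h‖²`. The projection onto `[a,b]` is nonexpansive,
so `‖h‖ ≤ α⁻¹ ‖z̄ - z̄_𝒯‖ ≤ μ' / (2 C_M)`, and at most half of the coercivity constant is lost.
-/

open MeasureTheory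
open scoped RealInnerProductSpace ENNReal

/-- Mean value theorem for the directional derivative of a `C²` functional. -/
lemma exists_fderiv_sub_eq_iteratedFDeriv_two {E : Type*} [NormedAddCommGroup E]
    [NormedSpace ℝ E] {j : E → ℝ} (hj : ContDiff ℝ 2 j) (u h : E) :
    ∃ t ∈ Set.Ioo (0 : ℝ) 1,
      fderiv ℝ j (u + h) h - fderiv ℝ j u h = iteratedFDeriv ℝ 2 j (u + t • h) ![h, h] := by
  have hd : Differentiable ℝ (fderiv ℝ j) :=
    (hj.fderiv_right (m := 1) (by norm_num)).differentiable (by norm_num)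
  have hder : ∀ t : ℝ, HasDerivAt (fun t : ℝ => fderiv ℝ j (u + t • h) h)
      (iteratedFDeriv ℝ 2 j (u + t • h) ![h, h]) t := by
    intro t
    have h1 : HasDerivAt (fun t : ℝ => u + t • h) h t := by
      simpa using ((hasDerivAt_id t).smul_const h).const_add u
    have h2 := (hd (u + t • h)).hasFDerivAt.comp_hasDerivAt t h1
    simpa [iteratedFDeriv_two_apply] using h2.clm_apply (hasDerivAt_const t h)
  obtain ⟨t, ht, hte⟩ := exists_hasDerivAt_eq_slope (fun t : ℝ => fderiv ℝ j (u + t • h) h)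
    (fun t => iteratedFDeriv ℝ 2 j (u + t • h) ![h, h]) one_pos
    (fun t _ => (hder t).continuousAt.continuousWithinAt) (fun t _ => hder t)
  refine ⟨t, ht, ?_⟩
  rw [hte]
  simp

/-- Clamping to `[a,b]` is nonexpansive, in the norm of `L²(Ω)^d`; here it is composed with
multiplication by `-α⁻¹`. -/
lemma norm_sub_le_of_clamp {X : Type*} [MeasurableSpace X] {μ : Measure X} {d : ℕ}
    {a b : Fin d → ℝ} {α : ℝ} (hα : 0 < α) {u v z w : Lp (EuclideanSpace ℝ (Fin d)) 2 μ}
    (hu : ∀ᵐ x ∂μ, ∀ i, u x i = min (b i) (max (-α⁻¹ * z x i) (a i)))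
    (hv : ∀ᵐ x ∂μ, ∀ i, v x i = min (b i) (max (-α⁻¹ * w x i) (a i))) :
    ‖u - v‖ ≤ α⁻¹ * ‖z - w‖ := by
  have hα' : 0 ≤ α⁻¹ := by positivity
  apply Lp.norm_le_mul_norm_of_ae_le_mul
  filter_upwards [hu, hv, Lp.coeFn_sub u v, Lp.coeFn_sub z w] with x hux hvx huv hzw
  rw [huv, hzw]
  have hcoord : ∀ i, ‖(u x - v x) i‖ ≤ ‖(α⁻¹ • (z x - w x)) i‖ := by
    intro i
    simp only [PiLp.sub_apply, PiLp.smul_apply, smul_eq_mul, Real.norm_eq_abs, hux i, hvx i]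
    calc |min (b i) (max (-α⁻¹ * z x i) (a i)) - min (b i) (max (-α⁻¹ * w x i) (a i))|
        ≤ |max (-α⁻¹ * z x i) (a i) - max (-α⁻¹ * w x i) (a i)| := by
          simpa using abs_min_sub_min_le_max (b i) (max (-α⁻¹ * z x i) (a i)) (b i)
            (max (-α⁻¹ * w x i) (a i))
      _ ≤ |-α⁻¹ * z x i - -α⁻¹ * w x i| := abs_max_sub_max_le_abs _ _ _
      _ = |α⁻¹ * (z x i - w x i)| := by
          rw [← abs_neg]
          ring_nf
  have hnorm : ‖u x - v x‖ ≤ ‖α⁻¹ • (z x - w x)‖ := by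
    rw [EuclideanSpace.norm_eq, EuclideanSpace.norm_eq]
    gcongr with i
    exact hcoord i
  simpa [norm_smul, abs_of_pos hα] using hnorm

theorem auxiliary_control_estimate
    {X : Type*} [MeasurableSpace X] (μ : Measure X) (d : ℕ)
    (a b : Fin d → ℝ) (hab : ∀ i, a i < b i)
    (α ν C₂ Cb θ : ℝ) (hα : 0 < α) (hν : 0 < ν) (hC₂ : 0 < C₂) (hCb : 0 < Cb)
    (hθ1 : θ < 1)
    (yΩ : Lp (EuclideanSpace ℝ (Fin d)) 2 μ)
    (S : Lp (EuclideanSpace ℝ (Fin d)) 2 μ → Lp (EuclideanSpace ℝ (Fin d)) 2 μ)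
    (Uad : Set (Lp (EuclideanSpace ℝ (Fin d)) 2 μ))
    (hUad : Uad = {u | ∀ᵐ x ∂μ, ∀ i, a i ≤ u x i ∧ u x i ≤ b i})
    (hsmall : ∀ u ∈ Uad, Cb * C₂ / ν ^ 2 * ‖u‖ ≤ θ)
    (j : Lp (EuclideanSpace ℝ (Fin d)) 2 μ → ℝ)
    (hj : j = fun u => (1 / 2) * ‖S u - yΩ‖ ^ 2 + (α / 2) * ‖u‖ ^ 2)
    (hjC2 : ContDiff ℝ 2 j)
    -- the optimal control `ū`, its adjoint velocity `z̄`, the discrete adjoint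
    -- velocity `z̄_𝒯`, and the auxiliary control `ũ = Π_{[a,b]}(-α⁻¹ z̄_𝒯)`
    (ubar zbar zT utilde : Lp (EuclideanSpace ℝ (Fin d)) 2 μ)
    (hubar : ubar ∈ Uad)
    (hproj : ∀ᵐ x ∂μ, ∀ i, ubar x i = min (b i) (max (-α⁻¹ * zbar x i) (a i)))
    (hutilde : ∀ᵐ x ∂μ, ∀ i, utilde x i = min (b i) (max (-α⁻¹ * zT x i) (a i)))
    -- the enlarged cones `C_ū^τ`, with `d̄ = z̄ + αū`
    (ConeTau : ℝ → Set (Lp (EuclideanSpace ℝ (Fin d)) 2 μ))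
    (hConeTau : ∀ τ : ℝ, ConeTau τ = {v | ∀ᵐ x ∂μ, ∀ i,
        (τ < |zbar x i + α * ubar x i| → v x i = 0) ∧
        ((ubar x i = a i ∧ |zbar x i + α * ubar x i| ≤ τ) → 0 ≤ v x i) ∧
        ((ubar x i = b i ∧ |zbar x i + α * ubar x i| ≤ τ) → v x i ≤ 0)})
    -- sufficient second order optimality condition with constants `μ' > 0`, `τ > 0`
    (μ' τ : ℝ) (hμ' : 0 < μ') (hτ : 0 < τ)
    (hSSC : ∀ v ∈ ConeTau τ, μ' * ‖v‖ ^ 2 ≤ iteratedFDeriv ℝ 2 j ubar ![v, v])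
    -- `M` bounds the relevant `L^∞` norms (for any mean value parameter `θ_𝒯 ∈ (0,1)`)
    (M : ℝ) (hM : 0 < M)
    (hMbound₁ : ∀ t ∈ Set.Ioo (0 : ℝ) 1,
      eLpNorm (⇑(ubar + t • (utilde - ubar))) ⊤ μ ≤ ENNReal.ofReal M)
    (hMbound₂ : eLpNorm (⇑(utilde - ubar)) ⊤ μ ≤ ENNReal.ofReal M)
    -- the constant `C_M` of the Lipschitz estimate for `j''`
    (CM : ℝ) (hCM : 0 < CM)
    (hCMprop : ∀ u h v : Lp (EuclideanSpace ℝ (Fin d)) 2 μ,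
      eLpNorm (⇑u) ⊤ μ ≤ ENNReal.ofReal M →
      eLpNorm (⇑h) ⊤ μ ≤ ENNReal.ofReal M →
      |iteratedFDeriv ℝ 2 j (u + h) ![v, v] - iteratedFDeriv ℝ 2 j u ![v, v]|
        ≤ CM * ‖h‖ * ‖v‖ ^ 2)
    -- assumptions on the mesh
    (hmesh₁ : utilde - ubar ∈ ConeTau τ)
    (hmesh₂ : ‖zbar - zT‖ ≤ α * μ' * (2 * CM)⁻¹) :
    μ' / 2 * ‖ubar - utilde‖ ^ 2 ≤
      fderiv ℝ j utilde (utilde - ubar) - fderiv ℝ j ubar (utilde - ubar) := by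
  obtain ⟨t, ht, hmv⟩ := exists_fderiv_sub_eq_iteratedFDeriv_two hjC2 ubar (utilde - ubar)
  have hnorm : ‖ubar - utilde‖ ≤ α⁻¹ * ‖zbar - zT‖ := norm_sub_le_of_clamp hα hproj hutilde
  rw [norm_sub_rev] at hnorm ⊢
  rw [add_sub_cancel] at hmv
  rw [hmv]
  have hssc := hSSC _ hmesh₁
  have hMt := hMbound₁ t ht
  set h := utilde - ubar
  have hsmallh : CM * ‖h‖ ≤ μ' / 2 := by
    calc CM * ‖h‖ ≤ CM * (α⁻¹ * (α * μ' * (2 * CM)⁻¹)) := by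
          gcongr
          exact hnorm.trans (by gcongr)
      _ = μ' / 2 := by field_simp
  -- The Lipschitz estimate is based at `ū + t h` with increment `-t h`, since the `L^∞` bound is
  -- available at the intermediate point rather than at `ū` itself.
  have hinc : eLpNorm (⇑(-(t • h))) ⊤ μ ≤ ENNReal.ofReal M := by
    refine le_trans ?_ hMbound₂
    apply eLpNorm_mono_ae
    filter_upwards [Lp.coeFn_neg (t • h), Lp.coeFn_smul t h] with x h1 h2
    rw [h1, Pi.neg_apply, norm_neg, h2, Pi.smul_apply, norm_smul, Real.norm_eq_abs,
      abs_of_pos ht.1]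
    exact mul_le_of_le_one_left (norm_nonneg _) ht.2.le
  have hlip := hCMprop (ubar + t • h) (-(t • h)) h hMt hinc
  rw [add_neg_cancel_right, norm_neg, norm_smul, Real.norm_eq_abs, abs_of_pos ht.1] at hlip
  have hloss : CM * (t * ‖h‖) * ‖h‖ ^ 2 ≤ μ' / 2 * ‖h‖ ^ 2 := by
    gcongr
    refine le_trans ?_ hsmallh
    gcongr
    exact mul_le_of_le_one_left (norm_nonneg _) ht.2.le
  linarith [le_abs_self (iteratedFDeriv ℝ 2 j ubar ![h, h]
    - iteratedFDeriv ℝ 2 j (ubar + t • h) ![h, h])]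
end

section
/- Let ū be a local optimal control with adjoint velocity z̄, so that ū = Π_{[a,b]}(−α⁻¹z̄) a.e. in Ω, and let ũ := Π_{[a,b]}(−α⁻¹z̄_𝒯). If ‖z̄ − z̄_𝒯‖_{L^∞(Ω)} ≤ τ/2, then ũ − ū belongs to the cone C_ū^τ; that is, for each component i = 1,…,d: (ũ − ū)_i(x) = 0 a.e. where |d̄_i(x)| > τ, (ũ − ū)_i(x) ≥ 0 a.e. where ū_i(x) = a_i and |d̄_i(x)| ≤ τ, and (ũ − ū)_i(x) ≤ 0 a.e. where ū_i(x) = b_i and |d̄_i(x)| ≤ τ, where d̄ := z̄ + αū. -/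
open MeasureTheory
open scoped RealInnerProductSpace ENNReal

/-!
The argument is pointwise and componentwise. If `d̄ = z̄ + α ū > τ`, then `-α⁻¹ z̄` lies below
`ū` by more than `τ / α`, which forces `ū = a`. Since `-α⁻¹ z̄_𝒯` is within `τ / (2α)` of
`-α⁻¹ z̄`, it is also below `a`, so `ũ = a = ū`; the case `d̄ < -τ` is symmetric with `b`
(`clamp_eq_clamp_of_lt_abs`). The two sign conditions only use `a ≤ ũ ≤ b`.
-/

/-- The scalar core: where the multiplier `z + α u` exceeds `τ` in absolute value, the lower or
the upper bound is active for both projections. -/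
lemma clamp_eq_clamp_of_lt_abs {a b α τ z w : ℝ} (hab : a < b) (hα : 0 < α) (hτ : 0 < τ)
    (hzw : |z - w| ≤ τ / 2)
    (h : τ < |z + α * min b (max (-α⁻¹ * z) a)|) :
    min b (max (-α⁻¹ * w) a) = min b (max (-α⁻¹ * z) a) := by
  obtain ⟨p, rfl⟩ : ∃ p, z = -(α * p) := ⟨-α⁻¹ * z, by field_simp⟩
  obtain ⟨q, rfl⟩ : ∃ q, w = -(α * q) := ⟨-α⁻¹ * w, by field_simp⟩
  have e : ∀ r : ℝ, -α⁻¹ * -(α * r) = r := fun r => by field_simp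
  rw [e] at h ⊢
  rw [e]
  obtain ⟨h1, h2⟩ := abs_le.1 hzw
  rcases le_total p a with hpa | hpa
  · rw [max_eq_right hpa, min_eq_right hab.le] at *
    have hd : 0 ≤ α * (a - p) := mul_nonneg hα.le (sub_nonneg.2 hpa)
    rw [abs_of_nonneg (by linarith)] at h
    have hqa : q ≤ a := le_of_mul_le_mul_left (by linarith) hα
    rw [max_eq_right hqa, min_eq_right hab.le]
  · rw [max_eq_left hpa] at *
    rcases le_total p b with hpb | hpb
    · -- With no active bound the multiplier vanishes.
      rw [min_eq_right hpb, neg_add_cancel, abs_zero] at h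
      linarith
    · rw [min_eq_left hpb] at *
      have hd : 0 ≤ α * (p - b) := mul_nonneg hα.le (sub_nonneg.2 hpb)
      rw [abs_of_nonpos (by linarith)] at h
      have hqb : b ≤ q := le_of_mul_le_mul_left (by linarith) hα
      rw [max_eq_left (hab.le.trans hqb), min_eq_left hqb]

/-!
A sufficient condition for `ũ - ū ∈ C_ū^τ` (Remark in section 4.3 of the paper).

Setting: controls in `L²(Ω)^d = Lp (EuclideanSpace ℝ (Fin d)) 2 μ`, box constraints
`a < b`.  `ū` is the local optimal control with adjoint velocity `z̄`, so that
`ū = Π_{[a,b]}(-α⁻¹ z̄)` a.e. (componentwise `Π` is `min(b, max(·, a))`), `z̄_𝒯` is the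
discrete adjoint velocity, and `ũ = Π_{[a,b]}(-α⁻¹ z̄_𝒯)`.  With `d̄ = z̄ + αū`:
if `‖z̄ - z̄_𝒯‖_{L^∞} ≤ τ/2`, then `ũ - ū` belongs to the cone `C_ū^τ`, i.e., a.e. and
for every component `i`:  `(ũ - ū)_i = 0` where `|d̄_i| > τ`; `(ũ - ū)_i ≥ 0` where
`ū_i = a_i` and `|d̄_i| ≤ τ`; and `(ũ - ū)_i ≤ 0` where `ū_i = b_i` and `|d̄_i| ≤ τ`.
-/
theorem utilde_sub_ubar_mem_coneTau
    {X : Type*} [MeasurableSpace X] (μ : Measure X) (d : ℕ)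
    (a b : Fin d → ℝ) (hab : ∀ i, a i < b i)
    (α τ : ℝ) (hα : 0 < α) (hτ : 0 < τ)
    (ubar zbar zT utilde : Lp (EuclideanSpace ℝ (Fin d)) 2 μ)
    -- projection formula for the optimal control
    (hproj : ∀ᵐ x ∂μ, ∀ i, ubar x i = min (b i) (max (-α⁻¹ * zbar x i) (a i)))
    -- definition of the auxiliary control `ũ`
    (hutilde : ∀ᵐ x ∂μ, ∀ i, utilde x i = min (b i) (max (-α⁻¹ * zT x i) (a i)))
    -- closeness of the continuous and discrete adjoint velocities in `L^∞(Ω)`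
    (hclose : eLpNorm (⇑(zbar - zT)) ⊤ μ ≤ ENNReal.ofReal (τ / 2)) :
    ∀ᵐ x ∂μ, ∀ i,
      (τ < |zbar x i + α * ubar x i| → utilde x i - ubar x i = 0) ∧
      ((ubar x i = a i ∧ |zbar x i + α * ubar x i| ≤ τ) →
        0 ≤ utilde x i - ubar x i) ∧
      ((ubar x i = b i ∧ |zbar x i + α * ubar x i| ≤ τ) →
        utilde x i - ubar x i ≤ 0) := by
  have hz : ∀ᵐ x ∂μ, ‖(zbar - zT) x‖ₑ ≤ ENNReal.ofReal (τ / 2) := by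
    rw [eLpNorm_exponent_top] at hclose
    filter_upwards [enorm_ae_le_eLpNormEssSup (⇑(zbar - zT)) μ] with x hx using hx.trans hclose
  filter_upwards [hproj, hutilde, hz, Lp.coeFn_sub zbar zT] with x hu hv hx hs i
  have hi : |zbar x i - zT x i| ≤ τ / 2 := by
    rw [← ofReal_norm, ENNReal.ofReal_le_ofReal_iff (by positivity), hs] at hx
    exact (PiLp.norm_apply_le (zbar x - zT x) i).trans hx
  refine ⟨fun h => ?_, fun h => ?_, fun h => ?_⟩
  · rw [hu i] at h
    rw [hu i, hv i, sub_eq_zero]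
    exact clamp_eq_clamp_of_lt_abs (hab i) hα hτ hi h
  · rw [h.1, hv i]
    exact sub_nonneg.2 (le_min (hab i).le (le_max_right _ _))
  · rw [h.1, hv i]
    exact sub_nonpos.2 (min_le_left _ _)
end

section
/- Let u₁, u₂ ∈ L²(Ω) and let (y₁,p₁), (y₂,p₂) ∈ H¹₀(Ω) × L²₀(Ω) be solutions of the weak stationary Navier–Stokes equations with data u₁ and u₂ respectively, that is, ν(∇y_j,∇v) + b(y_j;y_j,v) − (p_j, div v) = (u_j, v)_{L²(Ω)} and (q, div y_j) = 0 for all (v,q) ∈ H¹₀(Ω) × L²₀(Ω). If ‖∇y₂‖_{L²(Ω)} ≤ θ𝒞_b⁻¹ν with θ < 1, then ‖∇(y₁ − y₂)‖_{L²(Ω)} ≤ C₂ [ν(1−θ)]⁻¹ ‖u₁ − u₂‖_{L²(Ω)}. -/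
/-!
The difference `w = y₁ - y₂` is divergence free, so testing both equations with `w` removes the
pressures. Writing `b(y₁;y₁,w) - b(y₂;y₂,w) = b(y₁;w,w) + b(w;y₂,w)`, the first term vanishes by
antisymmetry, and the second is at most `θ ν ‖w‖²` in absolute value by the smallness of `y₂`.
It is absorbed into the viscous term `ν ‖w‖²`, which leaves
`ν (1 - θ) ‖w‖² ≤ C₂ ‖u₁ - u₂‖ ‖w‖`.
-/

open scoped RealInnerProductSpace

/-!
Lipschitz stability of the Navier--Stokes velocity with respect to the datum.

Abstract functional setting: `H` models `H¹₀(Ω)^d` with the gradient inner product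
(so `‖v‖ = ‖∇v‖_{L²(Ω)}`), `L` models `L²(Ω)^d`, `Q` models `L²₀(Ω)`; `ι` is the
Sobolev embedding with best constant `C₂`, `dvg` the divergence operator, and `trb`
the convective trilinear form `b` with continuity constant `Cb`, the antisymmetry
property for divergence-free first argument, and trilinearity.

Statement: if `(y₁,p₁)` and `(y₂,p₂)` solve the weak stationary Navier--Stokes
equations with data `u₁, u₂ ∈ L²(Ω)` and `‖∇y₂‖ ≤ θ Cb⁻¹ ν` with `θ < 1`, then
`‖∇(y₁ - y₂)‖ ≤ C₂ [ν(1-θ)]⁻¹ ‖u₁ - u₂‖_{L²}`.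
-/
theorem navier_stokes_lipschitz_stability
    {H Q L : Type*}
    [NormedAddCommGroup H] [InnerProductSpace ℝ H]
    [NormedAddCommGroup Q] [InnerProductSpace ℝ Q]
    [NormedAddCommGroup L] [InnerProductSpace ℝ L]
    (ι : H →ₗ[ℝ] L) (dvg : H →ₗ[ℝ] Q) (trb : H → H → H → ℝ)
    (ν C₂ Cb θ : ℝ) (hν : 0 < ν) (hC₂ : 0 < C₂) (hCb : 0 < Cb) (hθ1 : θ < 1)
    (hemb : ∀ v : H, ‖ι v‖ ≤ C₂ * ‖v‖)
    (hb_bound : ∀ v₁ v₂ v₃ : H, |trb v₁ v₂ v₃| ≤ Cb * ‖v₁‖ * ‖v₂‖ * ‖v₃‖)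
    (hb_skew : ∀ v₁ : H, dvg v₁ = 0 → ∀ v₂ v₃ : H, trb v₁ v₂ v₃ = - trb v₁ v₃ v₂)
    (hb_lin₁ : ∀ v₂ v₃ : H, IsLinearMap ℝ fun v₁ => trb v₁ v₂ v₃)
    (hb_lin₂ : ∀ v₁ v₃ : H, IsLinearMap ℝ fun v₂ => trb v₁ v₂ v₃)
    (u₁ u₂ : L) (y₁ y₂ : H) (p₁ p₂ : Q)
    (hdiv₁ : ∀ q : Q, ⟪q, dvg y₁⟫ = 0)
    (hdiv₂ : ∀ q : Q, ⟪q, dvg y₂⟫ = 0)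
    (heq₁ : ∀ v : H, ν * ⟪y₁, v⟫ + trb y₁ y₁ v - ⟪p₁, dvg v⟫ = ⟪u₁, ι v⟫)
    (heq₂ : ∀ v : H, ν * ⟪y₂, v⟫ + trb y₂ y₂ v - ⟪p₂, dvg v⟫ = ⟪u₂, ι v⟫)
    (hy₂ : ‖y₂‖ ≤ θ * Cb⁻¹ * ν) :
    ‖y₁ - y₂‖ ≤ C₂ * (ν * (1 - θ))⁻¹ * ‖u₁ - u₂‖ := by
  have hd₁ : dvg y₁ = 0 := inner_self_eq_zero.mp (hdiv₁ _)
  have hd₂ : dvg y₂ = 0 := inner_self_eq_zero.mp (hdiv₂ _)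
  set w := y₁ - y₂ with hw
  have hdw : dvg w = 0 := by rw [hw, map_sub, hd₁, hd₂, sub_zero]
  have hyw : y₁ = w + y₂ := by rw [hw, sub_add_cancel]
  have hskew : trb y₁ w w = 0 := by linarith [hb_skew y₁ hd₁ w w]
  have hsplit : trb y₁ y₁ w = trb y₁ w w + trb w y₂ w + trb y₂ y₂ w := by
    have h₂ := (hb_lin₂ y₁ w).map_add w y₂
    have h₁ := (hb_lin₁ y₂ w).map_add w y₂
    rw [← hyw] at h₁ h₂
    rw [h₂, h₁, add_assoc]
  have hww : ⟪y₁, w⟫ - ⟪y₂, w⟫ = ‖w‖ ^ 2 := by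
    rw [← inner_sub_left, ← hw, real_inner_self_eq_norm_sq]
  have henergy : ν * ‖w‖ ^ 2 + trb w y₂ w = ⟪u₁ - u₂, ι w⟫ := by
    have e₁ := heq₁ w
    have e₂ := heq₂ w
    rw [hdw, inner_zero_right] at e₁ e₂
    rw [inner_sub_left, ← hww]
    linarith
  have hrhs : ⟪u₁ - u₂, ι w⟫ ≤ ‖u₁ - u₂‖ * (C₂ * ‖w‖) :=
    (real_inner_le_norm _ _).trans (mul_le_mul_of_nonneg_left (hemb w) (norm_nonneg _))
  have hconv : |trb w y₂ w| ≤ θ * ν * ‖w‖ ^ 2 := by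
    have hy : Cb * ‖y₂‖ ≤ θ * ν := by
      calc Cb * ‖y₂‖ ≤ Cb * (θ * Cb⁻¹ * ν) := by gcongr
        _ = θ * ν := by field_simp
    calc |trb w y₂ w| ≤ Cb * ‖w‖ * ‖y₂‖ * ‖w‖ := hb_bound _ _ _
      _ = Cb * ‖y₂‖ * ‖w‖ ^ 2 := by ring
      _ ≤ θ * ν * ‖w‖ ^ 2 := by gcongr
  have hpos : 0 < ν * (1 - θ) := mul_pos hν (sub_pos.mpr hθ1)
  rcases (norm_nonneg w).eq_or_lt with h0 | h0
  · rw [← h0]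
    positivity
  · have hmain : ν * (1 - θ) * ‖w‖ ≤ C₂ * ‖u₁ - u₂‖ := by
      refine le_of_mul_le_mul_right ?_ h0
      linarith [neg_abs_le (trb w y₂ w)]
    rw [mul_right_comm, ← div_eq_mul_inv, le_div_iff₀ hpos]
    linarith
end
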